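/- Let X be an L²-continuous zero-mean process with covariance measure μ on [0,T]², let γ(t) = R(t,t) = Var(X_t), ℰ(t) = μ(D_t) the energy (diagonal mass), and Δ_t = {(s₁,s₂): 0 ≤ s₁ < s₂ ≤ t}. Then for every continuous ψ : [0,∞) → ℝ and every t ∈ [0,T], lim_{ε→0} ∫₀ᵗ ψ(s)(γ(s+ε)−γ(s))/ε ds = ∫₀ᵗ ψ(s) dℰ(s) + 2∫_{Δ_t} ψ(s₂) dμ(s₁,s₂). In particular, taking ψ ≡ 1, γ(t) = ℰ(t) + 2μ(Δ_t), and γ has bounded variation with total variation at most |μ|(D_T) + 2|μ|([0,T]²). -/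

import Mathlib

open Set MeasureTheory Filter
open scoped Topology ENNReal

noncomputable section

/-- Integral of `f` with respect to a finite signed measure, via the Jordan decomposition. -/
def sintegral {α : Type*} [MeasurableSpace α] (μ : SignedMeasure α) (f : α → ℝ) : ℝ :=
  (∫ x, f x ∂μ.toJordanDecomposition.posPart) - ∫ x, f x ∂μ.toJordanDecomposition.negPart

/-!
By uniqueness of Jordan decompositions, the positive and negative parts of `μ` inherit the
symmetry of `R` under swapping coordinates, and continuity of `R` at `0` makes the coordinate
axes null. Since `R` vanishes on the axes, `γ(t) = μ(]0, t]²)`, so `γ` is the distribution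
function of the image of `μ` under `max`. Hence Fubini turns `∫₀ᵗ ψ(s) (γ(s + ε) - γ(s)) / ε ds`
into the integral, against that image, of the averages of `ψ · 1_{]0, t]}` over `[x - ε, x[`,
and these converge to the left-continuous function `ψ · 1_{]0, t]}`. The limit `∫ ψ(max(s₁, s₂))
dμ` over `]0, t]²` splits into the diagonal and two triangles that are mirror images of each
other. Finally, the squares `]0, t]²` increase with `t`, so the variation of `γ` is at most the
mass of `|μ|`.
-/

section VectorMeasure

variable {α : Type*} [MeasurableSpace α]

theorem vectorMeasure_ext_of_Ioc_prod_Ioc {M : Type*} [AddCommGroup M] [TopologicalSpace M]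
    [T2Space M] {μ ν : VectorMeasure (ℝ × ℝ) M}
    (h : ∀ a₁ b₁ a₂ b₂ : ℝ, a₁ ≤ b₁ → a₂ ≤ b₂ →
      μ (Ioc a₁ b₁ ×ˢ Ioc a₂ b₂) = ν (Ioc a₁ b₁ ×ˢ Ioc a₂ b₂)) :
    μ = ν := by
  let C : Set (Set ℝ) := {S | ∃ l u, l ≤ u ∧ Ioc l u = S}
  let I : ℕ → Set ℝ := fun n => Ioc (-(n : ℝ)) n
  have hI_mem (n : ℕ) : I n ∈ C := ⟨-n, n, neg_le_self n.cast_nonneg, rfl⟩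
  have hI_mono : Monotone I := fun m n hmn =>
    Ioc_subset_Ioc (neg_le_neg (Nat.cast_le.2 hmn)) (Nat.cast_le.2 hmn)
  have hI_univ : ⋃ n, I n = univ := by
    refine eq_univ_of_forall fun x => mem_iUnion.2 ?_
    obtain ⟨n, hn⟩ := exists_nat_gt |x|
    exact ⟨n, (abs_lt.1 hn).1, (abs_lt.1 hn).2.le⟩
  have hC_gen : MeasurableSpace.generateFrom C = borel ℝ := (borel_eq_generateFrom_Ioc_le ℝ).symm
  have hC_pi : IsPiSystem C := by
    rintro _ ⟨a, b, -, rfl⟩ _ ⟨c, d, -, rfl⟩ ⟨x, hx⟩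
    rw [Ioc_inter_Ioc] at hx ⊢
    exact ⟨_, _, (hx.1.trans_le hx.2).le, rfl⟩
  have hC_span : IsCountablySpanning C := ⟨I, hI_mem, hI_univ⟩
  have hbox : ∀ S ∈ image2 (· ×ˢ ·) C C, μ S = ν S := by
    rintro _ ⟨_, ⟨a₁, b₁, h₁, rfl⟩, _, ⟨a₂, b₂, h₂, rfl⟩, rfl⟩
    exact h a₁ b₁ a₂ b₂ h₁ h₂
  have tendsto_univ (ρ : VectorMeasure (ℝ × ℝ) M) :
      Tendsto (fun n => ρ (I n ×ˢ I n)) atTop (𝓝 (ρ univ)) := by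
    have := VectorMeasure.tendsto_vectorMeasure_iUnion_atTop_nat (v := ρ)
      (hI_mono.set_prod hI_mono) fun n => measurableSet_Ioc.prod measurableSet_Ioc
    rwa [iUnion_prod_of_monotone hI_mono hI_mono, hI_univ, univ_prod_univ] at this
  refine VectorMeasure.ext_of_generateFrom _ hbox
    (generateFrom_eq_prod hC_gen hC_gen hC_span hC_span).symm (hC_pi.prod hC_pi) ?_
  refine tendsto_nhds_unique (tendsto_univ μ) ((tendsto_univ ν).congr fun n => ?_)
  exact (hbox _ (mem_image2_of_mem (hI_mem n) (hI_mem n))).symm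

theorem toJordanDecomposition_map_of_measurableEmbedding {β : Type*} [MeasurableSpace β]
    (μ : SignedMeasure α) {e : α → β} (he : MeasurableEmbedding e) :
    SignedMeasure.toJordanDecomposition (μ.map e) =
      ({ posPart := μ.toJordanDecomposition.posPart.map e
         negPart := μ.toJordanDecomposition.negPart.map e
         mutuallySingular := he.mutuallySingular_map μ.toJordanDecomposition.mutuallySingular } :
        JordanDecomposition β) := by
  refine SignedMeasure.toJordanDecomposition_eq ?_
  ext s hs
  rw [VectorMeasure.map_apply _ he.measurable hs, JordanDecomposition.toSignedMeasure,
    Measure.toSignedMeasure_sub_apply hs, map_measureReal_apply he.measurable hs,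
    map_measureReal_apply he.measurable hs,
    μ.apply_eq_posPart_real_sub_negPart_real (he.measurable hs)]

theorem eVariationOn_vectorMeasure_le_variation {ι V : Type*} [LinearOrder ι]
    [NormedAddCommGroup V] (μ : VectorMeasure α V) {S : ι → Set α} {s : Set ι} {A : Set α}
    (hmono : MonotoneOn S s) (hmeas : ∀ i ∈ s, MeasurableSet (S i)) (hA : ∀ i ∈ s, S i ⊆ A) :
    eVariationOn (fun i => μ (S i)) s ≤ μ.variation A := by
  refine iSup_le fun ⟨n, u, hu, hus⟩ => ?_
  have edist_step (k : ℕ) :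
      edist (μ (S (u (k + 1)))) (μ (S (u k))) ≤ μ.variation (S (u (k + 1)) \ S (u k)) := by
    rw [edist_eq_enorm_sub, ← VectorMeasure.of_sdiff (hmeas _ (hus k)) (hmeas _ (hus (k + 1)))
      (hmono (hus k) (hus (k + 1)) (hu k.le_succ))]
    exact VectorMeasure.enorm_measure_le_variation μ _
  have telescope (k : ℕ) :
      ∑ j ∈ Finset.range k, edist (μ (S (u (j + 1)))) (μ (S (u j))) ≤ μ.variation (S (u k)) := by
    induction k with
    | zero => simp
    | succ k ih =>
      rw [Finset.sum_range_succ]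
      refine (add_le_add ih (edist_step k)).trans_eq ?_
      rw [measure_add_sdiff (hmeas _ (hus k)).nullMeasurableSet,
        union_eq_right.2 (hmono (hus k) (hus (k + 1)) (hu k.le_succ))]
  exact (telescope n).trans (measure_mono (hA _ (hus n)))

end VectorMeasure

/-- `μ` is the covariance measure of the kernel `R`: half-open boxes have as mass the planar
increment of `R`. -/
def IsCovarianceMeasure (R : ℝ → ℝ → ℝ) (μ : SignedMeasure (ℝ × ℝ)) : Prop :=
  ∀ a₁ b₁ a₂ b₂ : ℝ, a₁ ≤ b₁ → a₂ ≤ b₂ →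
    μ (Ioc a₁ b₁ ×ˢ Ioc a₂ b₂) = R b₁ b₂ + R a₁ a₂ - R a₁ b₂ - R b₁ a₂

namespace IsCovarianceMeasure

variable {R : ℝ → ℝ → ℝ} {μ : SignedMeasure (ℝ × ℝ)}

theorem map_swap (hμ : IsCovarianceMeasure R μ) (hsymm : ∀ s t, R s t = R t s) :
    μ.map Prod.swap = μ := by
  refine vectorMeasure_ext_of_Ioc_prod_Ioc fun a₁ b₁ a₂ b₂ h₁ h₂ => ?_
  rw [VectorMeasure.map_apply _ measurable_swap (measurableSet_Ioc.prod measurableSet_Ioc),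
    preimage_swap_prod, hμ _ _ _ _ h₂ h₁, hμ _ _ _ _ h₁ h₂, hsymm b₂ b₁, hsymm a₂ a₁, hsymm a₂ b₁,
    hsymm b₂ a₁]
  ring

theorem map_swap_posPart (hμ : IsCovarianceMeasure R μ) (hsymm : ∀ s t, R s t = R t s) :
    μ.toJordanDecomposition.posPart.map Prod.swap = μ.toJordanDecomposition.posPart := by
  have := toJordanDecomposition_map_of_measurableEmbedding μ (e := Prod.swap)
    MeasurableEquiv.prodComm.measurableEmbedding
  rw [hμ.map_swap hsymm] at this
  exact (congrArg JordanDecomposition.posPart this).symm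

theorem map_swap_negPart (hμ : IsCovarianceMeasure R μ) (hsymm : ∀ s t, R s t = R t s) :
    μ.toJordanDecomposition.negPart.map Prod.swap = μ.toJordanDecomposition.negPart := by
  have := toJordanDecomposition_map_of_measurableEmbedding μ (e := Prod.swap)
    MeasurableEquiv.prodComm.measurableEmbedding
  rw [hμ.map_swap hsymm] at this
  exact (congrArg JordanDecomposition.negPart this).symm

theorem apply_singleton_prod_Ioc (hμ : IsCovarianceMeasure R μ) {x : ℝ}
    (hcont : ∀ s, ContinuousWithinAt (fun r => R r s) (Iio x) x) {c d : ℝ} (hcd : c ≤ d) :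
    μ ({x} ×ˢ Ioc c d) = 0 := by
  obtain ⟨u, hu_mono, hu_lt, hu_lim⟩ := exists_seq_strictMono_tendsto x
  have hu_lim' : Tendsto u atTop (𝓝[<] x) :=
    tendsto_nhdsWithin_iff.2 ⟨hu_lim, Eventually.of_forall hu_lt⟩
  have iInter_box : ⋂ n, Ioc (u n) x ×ˢ Ioc c d = {x} ×ˢ Ioc c d := by
    ext ⟨y, z⟩
    refine mem_iInter.trans ⟨fun h => ⟨le_antisymm (h 0).1.2 ?_, (h 0).2⟩, ?_⟩
    · exact le_of_tendsto' hu_lim fun n => (h n).1.1.le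
    · rintro ⟨rfl, hz⟩ n
      exact ⟨⟨hu_lt n, le_rfl⟩, hz⟩
  have tendsto_box : Tendsto (fun n => μ (Ioc (u n) x ×ˢ Ioc c d)) atTop
      (𝓝 (μ ({x} ×ˢ Ioc c d))) := by
    rw [← iInter_box]
    exact VectorMeasure.tendsto_vectorMeasure_iInter_atTop_nat
      (fun m n hmn => prod_mono_left (Ioc_subset_Ioc_left (hu_mono.monotone hmn)))
      fun n => measurableSet_Ioc.prod measurableSet_Ioc
  have tendsto_increment : Tendsto (fun n => R x d + R (u n) c - R (u n) d - R x c) atTop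
      (𝓝 (R x d + R x c - R x d - R x c)) :=
    (((((hcont c).tendsto.comp hu_lim').const_add _).sub ((hcont d).tendsto.comp hu_lim')).sub_const
      _)
  refine tendsto_nhds_unique tendsto_box ?_
  simpa [hμ _ _ _ _ (hu_lt _).le hcd] using tendsto_increment

theorem totalVariation_singleton_prod_univ (hμ : IsCovarianceMeasure R μ) {x : ℝ}
    (hcont : ∀ s, ContinuousWithinAt (fun r => R r s) (Iio x) x) :
    μ.totalVariation ({x} ×ˢ univ) = 0 := by
  have hline : MeasurableSet (({x} : Set ℝ) ×ˢ (univ : Set ℝ)) :=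
    (measurableSet_singleton x).prod .univ
  have restrict_line : μ.restrict ({x} ×ˢ univ) = 0 := by
    refine vectorMeasure_ext_of_Ioc_prod_Ioc fun a b c d _ hcd => ?_
    rw [VectorMeasure.restrict_apply _ hline (measurableSet_Ioc.prod measurableSet_Ioc),
      prod_inter_prod, inter_univ, FunLike.coe_zero, Pi.zero_apply]
    by_cases hx : x ∈ Ioc a b
    · rw [inter_eq_right.2 (singleton_subset_iff.2 hx), hμ.apply_singleton_prod_Ioc hcont hcd]
    · rw [inter_singleton_eq_empty.2 hx, empty_prod, μ.empty]
  rw [SignedMeasure.totalVariation_eq_variation, ← Measure.restrict_eq_zero,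
    ← VectorMeasure.variation_restrict hline, restrict_line, VectorMeasure.variation_zero]

theorem apply_Ioc_zero_prod_self (hμ : IsCovarianceMeasure R μ) (hsymm : ∀ s t, R s t = R t s)
    (hzero : ∀ t, R 0 t = 0) {t : ℝ} (ht : 0 ≤ t) : μ (Ioc 0 t ×ˢ Ioc 0 t) = R t t := by
  rw [hμ 0 t 0 t ht ht, hsymm t 0, hzero, hzero]
  ring

end IsCovarianceMeasure

section LeftAverage

variable {E : Type*} [NormedAddCommGroup E] {g : ℝ → E} {ν : Measure ℝ} [IsFiniteMeasure ν]

theorem continuousWithinAt_Iic_indicator_Ioc {a b : ℝ} {f : ℝ → E} (hf : ContinuousOn f (Icc a b))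
    (x : ℝ) : ContinuousWithinAt ((Ioc a b).indicator f) (Iic x) x := by
  rcases le_or_gt x a with hxa | hxa
  · refine (continuousWithinAt_const (b := (0 : E))).congr (fun y (hy : y ≤ x) => ?_) ?_ <;>
      exact indicator_of_notMem (fun h => by linarith [h.1]) _
  rcases le_or_gt x b with hxb | hxb
  · have hmem : Ioc a b ∈ 𝓝[≤] x :=
      mem_of_superset (Ioc_mem_nhdsLE hxa) (Ioc_subset_Ioc_right hxb)
    have hfx : ContinuousWithinAt f (Iic x) x :=
      (hf x ⟨hxa.le, hxb⟩).mono_of_mem_nhdsWithin (mem_of_superset hmem Ioc_subset_Icc_self)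
    refine hfx.congr_of_eventuallyEq ?_ (indicator_of_mem (show x ∈ Ioc a b from ⟨hxa, hxb⟩) f)
    filter_upwards [hmem] with y hy using indicator_of_mem hy f
  · have hvanish : (Ioc a b).indicator f =ᶠ[𝓝 x] fun _ => 0 := by
      filter_upwards [Ioi_mem_nhds hxb] with y (hy : b < y)
      exact indicator_of_notMem (fun h => hy.not_ge h.2) f
    exact (continuousAt_const.congr hvanish.symm).continuousWithinAt

theorem integrable_uncurry_indicator_Ioc (hg : Integrable g) (ε : ℝ) :
    Integrable (Function.uncurry fun s x => (Ioc s (s + ε)).indicator (fun _ => g s) x)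
      (volume.prod ν) :=
  (hg.comp_fst ν).indicator <| (measurableSet_lt measurable_fst measurable_snd).inter
    (measurableSet_le measurable_snd (measurable_fst.add_const ε))

variable [NormedSpace ℝ E]

theorem integral_indicator_Ioc_eq_setIntegral_Ico (g : ℝ → E) (ε x : ℝ) :
    ∫ s, (Ioc s (s + ε)).indicator (fun _ => g s) x = ∫ s in Ico (x - ε) x, g s := by
  rw [← integral_indicator measurableSet_Ico]
  congr 1 with s
  refine indicator_eq_indicator ?_ rfl
  simp only [mem_Ioc, mem_Ico, sub_le_iff_le_add, and_comm]

theorem integrable_setIntegral_Ico (hg : Integrable g) (ε : ℝ) :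
    Integrable (fun x => ∫ s in Ico (x - ε) x, g s) ν := by
  simpa only [Function.uncurry_apply_pair, integral_indicator_Ioc_eq_setIntegral_Ico] using
    (integrable_uncurry_indicator_Ioc (ν := ν) hg ε).integral_prod_right

variable [CompleteSpace E]

theorem tendsto_inv_smul_setIntegral_Ico_sub_left (hg : LocallyIntegrable g) {x : ℝ}
    (hx : ContinuousWithinAt g (Iic x) x) :
    Tendsto (fun ε => ε⁻¹ • ∫ s in Ico (x - ε) x, g s) (𝓝[>] 0) (𝓝 (g x)) := by
  have hderiv : HasDerivWithinAt (fun u => ∫ s in x..u, g s) (g x) (Iic x) x :=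
    intervalIntegral.integral_hasDerivWithinAt_right
      (hg.integrableOn_isCompact isCompact_uIcc).intervalIntegrable
      hg.aestronglyMeasurable.stronglyMeasurableAtFilter hx
  have hsub : Tendsto (fun ε => x - ε) (𝓝[>] 0) (𝓝[Iic x \ {x}] x) := by
    refine tendsto_nhdsWithin_iff.2 ⟨?_, ?_⟩
    · simpa using ((continuous_sub_left x).tendsto 0).mono_left nhdsWithin_le_nhds
    · filter_upwards [self_mem_nhdsWithin] with ε (hε : 0 < ε)
      exact ⟨(sub_lt_self x hε).le, (sub_lt_self x hε).ne⟩
  refine ((hasDerivWithinAt_iff_tendsto_slope.1 hderiv).comp hsub).congr' ?_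
  filter_upwards [self_mem_nhdsWithin] with ε (hε : 0 < ε)
  rw [Function.comp_apply, slope_def_module, intervalIntegral.integral_same, sub_zero,
    sub_sub_cancel_left, inv_neg, intervalIntegral.integral_symm, smul_neg, neg_smul, neg_neg,
    intervalIntegral.integral_of_le (sub_lt_self x hε).le, integral_Ico_eq_integral_Ioc]

theorem integral_measureReal_Ioc_smul (hg : Integrable g) (ε : ℝ) :
    ∫ s, ν.real (Ioc s (s + ε)) • g s = ∫ x, (∫ s in Ico (x - ε) x, g s) ∂ν := by
  simpa only [integral_indicator_const _ measurableSet_Ioc,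
    integral_indicator_Ioc_eq_setIntegral_Ico] using
    integral_integral_swap (integrable_uncurry_indicator_Ioc (ν := ν) hg ε)

theorem integrable_measureReal_Ioc_smul (hg : Integrable g) (ε : ℝ) :
    Integrable fun s => ν.real (Ioc s (s + ε)) • g s := by
  simpa only [Function.uncurry_apply_pair, integral_indicator_const _ measurableSet_Ioc] using
    (integrable_uncurry_indicator_Ioc (ν := ν) hg ε).integral_prod_left

theorem tendsto_integral_measureReal_Ioc_div_smul
    (hg : Integrable g) {C : ℝ} (hC : ∀ x, ‖g x‖ ≤ C)
    (hcont : ∀ x, ContinuousWithinAt g (Iic x) x) :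
    Tendsto (fun ε => ∫ s, (ν.real (Ioc s (s + ε)) / ε) • g s) (𝓝[>] 0) (𝓝 (∫ x, g x ∂ν)) := by
  have fubini (ε : ℝ) : ∫ s, (ν.real (Ioc s (s + ε)) / ε) • g s =
      ∫ x, ε⁻¹ • (∫ s in Ico (x - ε) x, g s) ∂ν := by
    simp only [div_eq_inv_mul, mul_smul]
    rw [integral_smul, integral_smul, integral_measureReal_Ioc_smul hg]
  simp only [fubini]
  refine tendsto_integral_filter_of_dominated_convergence (fun _ => C)
    (Eventually.of_forall fun ε => ((integrable_setIntegral_Ico hg ε).smul _).1) ?_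
    (integrable_const C) (ae_of_all _ fun x =>
      tendsto_inv_smul_setIntegral_Ico_sub_left hg.locallyIntegrable (hcont x))
  filter_upwards [self_mem_nhdsWithin] with ε (hε : 0 < ε)
  refine ae_of_all _ fun x => ?_
  have hbound := norm_setIntegral_le_of_norm_le_const (μ := volume) (s := Ico (x - ε) x)
    measure_Ico_lt_top fun s _ => hC s
  rw [Real.volume_real_Ico_of_le (sub_le_self x hε.le), sub_sub_cancel] at hbound
  rw [norm_smul, norm_inv, Real.norm_of_nonneg hε.le]
  exact (inv_mul_le_iff₀ hε).2 (hbound.trans_eq (mul_comm C ε))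

theorem integrableOn_measureReal_Ioc_div_smul {S : Set ℝ} (hS : MeasurableSet S)
    (hg : IntegrableOn g S) (ε : ℝ) :
    IntegrableOn (fun s => (ν.real (Ioc s (s + ε)) / ε) • g s) S := by
  have := ((integrable_measureReal_Ioc_smul (ν := ν) (hg.integrable_indicator hS) ε).smul
    ε⁻¹).integrableOn (s := S)
  refine this.congr_fun (fun s hs => ?_) hS
  simp only [Pi.smul_apply, indicator_of_mem hs, div_eq_inv_mul, mul_smul]

theorem tendsto_setIntegral_measureReal_Ioc_div_smul {a b : ℝ} {f : ℝ → E}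
    (hf : ContinuousOn f (Icc a b)) :
    Tendsto (fun ε => ∫ s in Ioc a b, (ν.real (Ioc s (s + ε)) / ε) • f s) (𝓝[>] 0)
      (𝓝 (∫ x in Ioc a b, f x ∂ν)) := by
  obtain ⟨C, hC⟩ := isCompact_Icc.exists_bound_of_continuousOn hf
  have hint : Integrable ((Ioc a b).indicator f) :=
    (hf.integrableOn_Icc.mono_set Ioc_subset_Icc_self).integrable_indicator measurableSet_Ioc
  have hbound (x : ℝ) : ‖(Ioc a b).indicator f x‖ ≤ max C 0 := by
    by_cases hx : x ∈ Ioc a b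
    · exact (indicator_of_mem hx f).symm ▸ (hC x (Ioc_subset_Icc_self hx)).trans (le_max_left C 0)
    · exact (indicator_of_notMem hx f).symm ▸ norm_zero.trans_le (le_max_right C 0)
  have hlim := tendsto_integral_measureReal_Ioc_div_smul (ν := ν) hint hbound
    (continuousWithinAt_Iic_indicator_Ioc hf)
  rw [integral_indicator measurableSet_Ioc] at hlim
  refine hlim.congr fun ε => ?_
  rw [← integral_indicator measurableSet_Ioc]
  simp only [indicator_smul_apply]

end LeftAverage

section SymmetricMeasure

variable {α E : Type*} [LinearOrder α] [MeasurableSpace α] [NormedAddCommGroup E] [NormedSpace ℝ E]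
  {P : Measure (α × α)} {A : Set (α × α)}

theorem setIntegral_max_inter_gt_eq (hP : P.map Prod.swap = P) (hA : Prod.swap ⁻¹' A = A)
    (f : α → E) :
    ∫ q in A ∩ {q | q.2 < q.1}, f (max q.1 q.2) ∂P =
      ∫ q in A ∩ {q | q.1 < q.2}, f (max q.1 q.2) ∂P := by
  have hswap : MeasurePreserving Prod.swap P P := ⟨measurable_swap, hP⟩
  rw [← hswap.setIntegral_preimage_emb MeasurableEquiv.prodComm.measurableEmbedding _
    (A ∩ {q | q.1 < q.2}), preimage_inter, hA]
  simp only [Prod.fst_swap, Prod.snd_swap, max_comm, preimage_ofPred_eq]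

variable [TopologicalSpace α] [OrderClosedTopology α] [SecondCountableTopology α]
  [OpensMeasurableSpace α]

theorem setIntegral_max_eq_diagonal_add_two_smul (hP : P.map Prod.swap = P)
    (hA : Prod.swap ⁻¹' A = A) (hA_meas : MeasurableSet A) {f : α → E}
    (hf : IntegrableOn (fun q => f (max q.1 q.2)) A P) :
    ∫ q in A, f (max q.1 q.2) ∂P =
      ∫ q in A ∩ {q | q.1 = q.2}, f q.2 ∂P + (2 : ℝ) • ∫ q in A ∩ {q | q.1 < q.2}, f q.2 ∂P := by
  have hlt : MeasurableSet {q : α × α | q.1 < q.2} := measurableSet_lt measurable_fst measurable_snd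
  have hgt : MeasurableSet {q : α × α | q.2 < q.1} := measurableSet_lt measurable_snd measurable_fst
  have below_diagonal : (A \ {q | q.1 < q.2}) ∩ {q | q.2 < q.1} = A ∩ {q | q.2 < q.1} :=
    Subset.antisymm (fun q h => ⟨h.1.1, h.2⟩) fun q h => ⟨⟨h.1, not_lt_of_gt h.2⟩, h.2⟩
  have on_diagonal : (A \ {q | q.1 < q.2}) \ {q | q.2 < q.1} = A ∩ {q | q.1 = q.2} := by
    ext q
    simp only [Set.mem_sdiff, mem_inter_iff, mem_ofPred_eq, not_lt, le_antisymm_iff, and_assoc,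
      and_comm (a := q.2 ≤ q.1)]
  rw [← integral_inter_add_sdiff hlt hf,
    ← integral_inter_add_sdiff hgt (hf.mono_set sdiff_subset), below_diagonal, on_diagonal,
    setIntegral_max_inter_gt_eq hP hA, two_smul, ← add_assoc, add_comm]
  have max_eq_snd {B : Set (α × α)} (hB : MeasurableSet B) (hle : ∀ q ∈ B, q.1 ≤ q.2) :
      ∫ q in B, f (max q.1 q.2) ∂P = ∫ q in B, f q.2 ∂P :=
    setIntegral_congr_fun hB fun q hq => congrArg f (max_eq_right (hle q hq))
  have hdiag : MeasurableSet (A ∩ {q | q.1 = q.2}) :=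
    on_diagonal ▸ (hA_meas.diff hlt).diff hgt
  rw [max_eq_snd (hA_meas.inter hlt) fun q hq => hq.2.le, max_eq_snd hdiag fun q hq => hq.2.le]

end SymmetricMeasure

section Quadrant

variable {P : Measure (ℝ × ℝ)} {t : ℝ} {f : ℝ → ℝ}

/-- The diagonal `D_t` of the square `[0, t]²`, the set whose mass is the energy at time `t`. -/
def diagonalSegment (t : ℝ) : Set (ℝ × ℝ) := {q | q.1 = q.2 ∧ q.1 ∈ Icc 0 t}

/-- The triangle `Δ_t` of the points `(s₁, s₂)` with `0 ≤ s₁ < s₂ ≤ t`. -/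
def openTriangle (t : ℝ) : Set (ℝ × ℝ) := {q | 0 ≤ q.1 ∧ q.1 < q.2 ∧ q.2 ≤ t}

theorem Icc_prod_Icc_inter_diagonal (t : ℝ) :
    Icc 0 t ×ˢ Icc 0 t ∩ {q : ℝ × ℝ | q.1 = q.2} = diagonalSegment t :=
  Subset.antisymm (fun _ h => ⟨h.2, h.1.1⟩) fun _ h => ⟨⟨h.2, h.1 ▸ h.2⟩, h.1⟩

theorem Icc_prod_Icc_inter_lt (t : ℝ) :
    Icc 0 t ×ˢ Icc 0 t ∩ {q : ℝ × ℝ | q.1 < q.2} = openTriangle t :=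
  Subset.antisymm (fun _ h => ⟨h.1.1.1, h.2, h.1.2.2⟩) fun _ ⟨h₀, hlt, ht⟩ =>
    ⟨⟨⟨h₀, hlt.le.trans ht⟩, ⟨h₀.trans hlt.le, ht⟩⟩, hlt⟩

theorem measurableSet_diagonalSegment (t : ℝ) : MeasurableSet (diagonalSegment t) :=
  Icc_prod_Icc_inter_diagonal t ▸ (measurableSet_Icc.prod measurableSet_Icc).inter
    (measurableSet_eq_fun measurable_fst measurable_snd)

theorem measurableSet_openTriangle (t : ℝ) : MeasurableSet (openTriangle t) :=
  Icc_prod_Icc_inter_lt t ▸ (measurableSet_Icc.prod measurableSet_Icc).inter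
    (measurableSet_lt measurable_fst measurable_snd)

/-- The image under `max` of the restriction of `P` to the open positive quadrant; its distribution
function is `t ↦ P (]0, t]²)`. -/
def quadrantMax (P : Measure (ℝ × ℝ)) : Measure ℝ :=
  (P.restrict (Ioi 0 ×ˢ Ioi 0)).map fun q => max q.1 q.2

instance [IsFiniteMeasure P] : IsFiniteMeasure (quadrantMax P) :=
  inferInstanceAs (IsFiniteMeasure (Measure.map _ _))

theorem quadrantMax_restrict_Ioc_zero (P : Measure (ℝ × ℝ)) (t : ℝ) :
    (quadrantMax P).restrict (Ioc 0 t) =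
      (P.restrict (Ioc 0 t ×ˢ Ioc 0 t)).map fun q => max q.1 q.2 := by
  have hmax : Measurable fun q : ℝ × ℝ => max q.1 q.2 := measurable_fst.max measurable_snd
  rw [quadrantMax, Measure.restrict_map hmax measurableSet_Ioc,
    Measure.restrict_restrict (hmax measurableSet_Ioc)]
  congr 2
  ext q
  simp only [mem_inter_iff, mem_preimage, mem_Ioc, mem_prod, mem_Ioi, lt_max_iff, max_le_iff]
  tauto

theorem quadrantMax_real_Ioc_zero (P : Measure (ℝ × ℝ)) (t : ℝ) :
    (quadrantMax P).real (Ioc 0 t) = P.real (Ioc 0 t ×ˢ Ioc 0 t) := by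
  rw [← measureReal_restrict_apply_univ, quadrantMax_restrict_Ioc_zero,
    map_measureReal_apply (measurable_fst.max measurable_snd) .univ, preimage_univ,
    measureReal_restrict_apply_univ]

theorem setIntegral_quadrantMax (P : Measure (ℝ × ℝ)) (hf : ContinuousOn f (Ioc 0 t)) :
    ∫ x in Ioc 0 t, f x ∂quadrantMax P = ∫ q in Ioc 0 t ×ˢ Ioc 0 t, f (max q.1 q.2) ∂P := by
  have hmeas := hf.aestronglyMeasurable (μ := quadrantMax P) measurableSet_Ioc
  rw [quadrantMax_restrict_Ioc_zero] at hmeas ⊢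
  exact integral_map (measurable_fst.max measurable_snd).aemeasurable hmeas

theorem Ioc_prod_Ioc_ae_eq_Icc_prod_Icc (hP : P.map Prod.swap = P)
    (haxis : P ({0} ×ˢ univ) = 0) (t : ℝ) :
    (Ioc 0 t ×ˢ Ioc 0 t : Set (ℝ × ℝ)) =ᵐ[P] Icc 0 t ×ˢ Icc 0 t := by
  have haxis_swap : P (univ ×ˢ {0}) = 0 := by
    rw [← hP, Measure.map_apply measurable_swap (.prod .univ (measurableSet_singleton 0)),
      preimage_swap_prod, haxis]
  refine eventuallyEq_set.2 ?_
  filter_upwards [measure_eq_zero_iff_ae_notMem.1 haxis, measure_eq_zero_iff_ae_notMem.1 haxis_swap]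
    with q hq₁ hq₂
  have hne₁ : 0 ≠ q.1 := fun h => hq₁ ⟨h.symm, mem_univ _⟩
  have hne₂ : 0 ≠ q.2 := fun h => hq₂ ⟨mem_univ _, h.symm⟩
  simp only [mem_prod, mem_Ioc, mem_Icc, hne₁.le_iff_lt, hne₂.le_iff_lt]

variable [IsFiniteMeasure P]

theorem setIntegral_quadrantMax_eq_diagonal_add_triangle (hP : P.map Prod.swap = P)
    (haxis : P ({0} ×ˢ univ) = 0) (hf : ContinuousOn f (Icc 0 t)) :
    ∫ x in Ioc 0 t, f x ∂quadrantMax P =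
      ∫ q in diagonalSegment t, f q.2 ∂P + 2 * ∫ q in openTriangle t, f q.2 ∂P := by
  have hint : IntegrableOn (fun q : ℝ × ℝ => f (max q.1 q.2)) (Icc 0 t ×ˢ Icc 0 t) P :=
    (hf.comp (by fun_prop) fun q hq =>
      ⟨hq.1.1.trans (le_max_left _ _), max_le hq.1.2 hq.2.2⟩).integrableOn_compact
      (isCompact_Icc.prod isCompact_Icc)
  rw [setIntegral_quadrantMax P (hf.mono Ioc_subset_Icc_self),
    setIntegral_congr_set (Ioc_prod_Ioc_ae_eq_Icc_prod_Icc hP haxis t),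
    setIntegral_max_eq_diagonal_add_two_smul hP (preimage_swap_prod _ _)
      (measurableSet_Icc.prod measurableSet_Icc) hint,
    Icc_prod_Icc_inter_diagonal, Icc_prod_Icc_inter_lt, smul_eq_mul]

theorem measureReal_Ioc_prod_Ioc_eq_diagonal_add_triangle (hP : P.map Prod.swap = P)
    (haxis : P ({0} ×ˢ univ) = 0) (t : ℝ) :
    P.real (Ioc 0 t ×ˢ Ioc 0 t) = P.real (diagonalSegment t) + 2 * P.real (openTriangle t) := by
  simpa [quadrantMax_real_Ioc_zero] using
    setIntegral_quadrantMax_eq_diagonal_add_triangle hP haxis (continuousOn_const (c := (1 : ℝ)))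

theorem quadrantMax_real_Ioc (P : Measure (ℝ × ℝ)) [IsFiniteMeasure P] {s : ℝ} (hs : 0 ≤ s)
    (hst : s ≤ t) : (quadrantMax P).real (Ioc s t) =
      P.real (Ioc 0 t ×ˢ Ioc 0 t) - P.real (Ioc 0 s ×ˢ Ioc 0 s) := by
  rw [← quadrantMax_real_Ioc_zero, ← quadrantMax_real_Ioc_zero, ← Ioc_union_Ioc_eq_Ioc hs hst,
    measureReal_union (Ioc_disjoint_Ioc_of_le le_rfl) measurableSet_Ioc, add_sub_cancel_left]

theorem integral_ite_diagonal_add_ite_triangle (P : Measure (ℝ × ℝ)) [IsFiniteMeasure P]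
    (hf : ContinuousOn f (Icc 0 t)) :
    ∫ q : ℝ × ℝ, (if q.1 = q.2 ∧ 0 ≤ q.1 ∧ q.1 ≤ t then f q.2 else 0) +
        (if 0 ≤ q.1 ∧ q.1 < q.2 ∧ q.2 ≤ t then 2 * f q.2 else 0) ∂P =
      ∫ q in diagonalSegment t, f q.2 ∂P + 2 * ∫ q in openTriangle t, f q.2 ∂P := by
  have hint : IntegrableOn (fun q : ℝ × ℝ => f q.2) (Icc 0 t ×ˢ Icc 0 t) P :=
    (hf.comp continuousOn_snd fun q hq => hq.2).integrableOn_compact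
      (isCompact_Icc.prod isCompact_Icc)
  have hD := measurableSet_diagonalSegment t
  have hΔ := measurableSet_openTriangle t
  rw [← integral_const_mul, ← integral_indicator hD, ← integral_indicator hΔ,
    ← integral_add ((hint.mono_set ?_).integrable_indicator hD)
      (IntegrableOn.integrable_indicator ((hint.mono_set ?_).const_mul 2) hΔ)]
  · congr 1 with q
    classical simp only [indicator_apply, diagonalSegment, openTriangle, mem_ofPred_eq, mem_Icc]
  · exact (Icc_prod_Icc_inter_diagonal t).symm.trans_subset inter_subset_left
  · exact (Icc_prod_Icc_inter_lt t).symm.trans_subset inter_subset_left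

end Quadrant

namespace IsCovarianceMeasure

variable {R : ℝ → ℝ → ℝ} {μ : SignedMeasure (ℝ × ℝ)}

theorem posPart_zero_prod_univ (hμ : IsCovarianceMeasure R μ)
    (hcont : ∀ s, ContinuousWithinAt (fun r => R r s) (Iio 0) 0) :
    μ.toJordanDecomposition.posPart ({0} ×ˢ univ) = 0 :=
  (add_eq_zero.1 (hμ.totalVariation_singleton_prod_univ hcont)).1

theorem negPart_zero_prod_univ (hμ : IsCovarianceMeasure R μ)
    (hcont : ∀ s, ContinuousWithinAt (fun r => R r s) (Iio 0) 0) :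
    μ.toJordanDecomposition.negPart ({0} ×ˢ univ) = 0 :=
  (add_eq_zero.1 (hμ.totalVariation_singleton_prod_univ hcont)).2

theorem diag_sub_diag (hμ : IsCovarianceMeasure R μ) (hsymm : ∀ s t, R s t = R t s)
    (hzero : ∀ t, R 0 t = 0) {s t : ℝ} (hs : 0 ≤ s) (hst : s ≤ t) :
    R t t - R s s = (quadrantMax μ.toJordanDecomposition.posPart).real (Ioc s t) -
      (quadrantMax μ.toJordanDecomposition.negPart).real (Ioc s t) := by
  have hmeas (r : ℝ) : MeasurableSet (Ioc 0 r ×ˢ Ioc 0 r) :=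
    measurableSet_Ioc.prod measurableSet_Ioc
  rw [quadrantMax_real_Ioc _ hs hst, quadrantMax_real_Ioc _ hs hst,
    ← hμ.apply_Ioc_zero_prod_self hsymm hzero hs,
    ← hμ.apply_Ioc_zero_prod_self hsymm hzero (hs.trans hst),
    μ.apply_eq_posPart_real_sub_negPart_real (hmeas s),
    μ.apply_eq_posPart_real_sub_negPart_real (hmeas t)]
  ring

theorem diag_eq_diagonal_add_triangle (hμ : IsCovarianceMeasure R μ) (hsymm : ∀ s t, R s t = R t s)
    (hzero : ∀ t, R 0 t = 0) (hcont : ∀ s, ContinuousWithinAt (fun r => R r s) (Iio 0) 0) {t : ℝ}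
    (ht : 0 ≤ t) : R t t = μ (diagonalSegment t) + 2 * μ (openTriangle t) := by
  rw [← hμ.apply_Ioc_zero_prod_self hsymm hzero ht,
    μ.apply_eq_posPart_real_sub_negPart_real (measurableSet_Ioc.prod measurableSet_Ioc),
    μ.apply_eq_posPart_real_sub_negPart_real (measurableSet_diagonalSegment t),
    μ.apply_eq_posPart_real_sub_negPart_real (measurableSet_openTriangle t),
    measureReal_Ioc_prod_Ioc_eq_diagonal_add_triangle (hμ.map_swap_posPart hsymm)
      (hμ.posPart_zero_prod_univ hcont),
    measureReal_Ioc_prod_Ioc_eq_diagonal_add_triangle (hμ.map_swap_negPart hsymm)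
      (hμ.negPart_zero_prod_univ hcont)]
  ring

theorem eVariationOn_diag_le (hμ : IsCovarianceMeasure R μ) (hsymm : ∀ s t, R s t = R t s)
    (hzero : ∀ t, R 0 t = 0) (T : ℝ) :
    eVariationOn (fun t => R t t) (Icc 0 T) ≤ μ.totalVariation (Icc 0 T ×ˢ Icc 0 T) := by
  have diag_eq : EqOn (fun t => R t t) (fun t => μ (Ioc 0 t ×ˢ Ioc 0 t)) (Icc 0 T) :=
    fun t ht => (hμ.apply_Ioc_zero_prod_self hsymm hzero ht.1).symm
  rw [eVariationOn.congr diag_eq, SignedMeasure.totalVariation_eq_variation]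
  refine eVariationOn_vectorMeasure_le_variation μ (fun s _ t _ hst => ?_)
    (fun t _ => measurableSet_Ioc.prod measurableSet_Ioc) fun t ht => ?_
  · exact prod_mono (Ioc_subset_Ioc_right hst) (Ioc_subset_Ioc_right hst)
  · exact prod_mono (Ioc_subset_Icc_self.trans (Icc_subset_Icc_right ht.2))
      (Ioc_subset_Icc_self.trans (Icc_subset_Icc_right ht.2))

theorem tendsto_setIntegral_mul_diag_sub_div (hμ : IsCovarianceMeasure R μ)
    (hsymm : ∀ s t, R s t = R t s) (hzero : ∀ t, R 0 t = 0)
    (hcont : ∀ s, ContinuousWithinAt (fun r => R r s) (Iio 0) 0) {t : ℝ} {ψ : ℝ → ℝ}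
    (hψ : ContinuousOn ψ (Icc 0 t)) :
    Tendsto (fun ε => ∫ s in Ioc 0 t, ψ s * (R (s + ε) (s + ε) - R s s) / ε) (𝓝[>] 0)
      (𝓝 (sintegral μ fun q =>
        (if q.1 = q.2 ∧ 0 ≤ q.1 ∧ q.1 ≤ t then ψ q.2 else 0) +
        (if 0 ≤ q.1 ∧ q.1 < q.2 ∧ q.2 ≤ t then 2 * ψ q.2 else 0))) := by
  set P := μ.toJordanDecomposition.posPart
  set N := μ.toJordanDecomposition.negPart
  have hint : IntegrableOn ψ (Ioc 0 t) := hψ.integrableOn_Icc.mono_set Ioc_subset_Icc_self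
  have limit_eq : sintegral μ (fun q =>
        (if q.1 = q.2 ∧ 0 ≤ q.1 ∧ q.1 ≤ t then ψ q.2 else 0) +
        (if 0 ≤ q.1 ∧ q.1 < q.2 ∧ q.2 ≤ t then 2 * ψ q.2 else 0)) =
      ∫ x in Ioc 0 t, ψ x ∂quadrantMax P - ∫ x in Ioc 0 t, ψ x ∂quadrantMax N := by
    rw [sintegral, integral_ite_diagonal_add_ite_triangle _ hψ,
      integral_ite_diagonal_add_ite_triangle _ hψ,
      setIntegral_quadrantMax_eq_diagonal_add_triangle (hμ.map_swap_posPart hsymm)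
        (hμ.posPart_zero_prod_univ hcont) hψ,
      setIntegral_quadrantMax_eq_diagonal_add_triangle (hμ.map_swap_negPart hsymm)
        (hμ.negPart_zero_prod_univ hcont) hψ]
  rw [limit_eq]
  refine ((tendsto_setIntegral_measureReal_Ioc_div_smul hψ).sub
    (tendsto_setIntegral_measureReal_Ioc_div_smul hψ)).congr' ?_
  filter_upwards [self_mem_nhdsWithin] with ε (hε : 0 < ε)
  rw [← integral_sub (integrableOn_measureReal_Ioc_div_smul measurableSet_Ioc hint ε)
    (integrableOn_measureReal_Ioc_div_smul measurableSet_Ioc hint ε)]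
  refine setIntegral_congr_fun measurableSet_Ioc fun s hs => ?_
  simp only [hμ.diag_sub_diag hsymm hzero hs.1.le (le_add_of_nonneg_right hε.le), smul_eq_mul]
  ring

end IsCovarianceMeasure

theorem stmt_17_general {R : ℝ → ℝ → ℝ} {μ : SignedMeasure (ℝ × ℝ)} (hμ : IsCovarianceMeasure R μ)
    (hsymm : ∀ s t, R s t = R t s) (hzero : ∀ t, R 0 t = 0)
    (hcont : ∀ s, ContinuousWithinAt (fun r => R r s) (Iio 0) 0) :
    (∀ (t : ℝ) (ψ : ℝ → ℝ), ContinuousOn ψ (Icc 0 t) →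
      Tendsto (fun ε => ∫ s in Ioc 0 t, ψ s * (R (s + ε) (s + ε) - R s s) / ε) (𝓝[>] 0)
        (𝓝 (sintegral μ fun q =>
          (if q.1 = q.2 ∧ 0 ≤ q.1 ∧ q.1 ≤ t then ψ q.2 else 0) +
          (if 0 ≤ q.1 ∧ q.1 < q.2 ∧ q.2 ≤ t then 2 * ψ q.2 else 0)))) ∧
    (∀ t, 0 ≤ t → R t t = μ (diagonalSegment t) + 2 * μ (openTriangle t)) ∧
    ∀ T, eVariationOn (fun t => R t t) (Icc 0 T) ≤ μ.totalVariation (Icc 0 T ×ˢ Icc 0 T) :=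
  ⟨fun _ _ hψ => hμ.tendsto_setIntegral_mul_diag_sub_div hsymm hzero hcont hψ,
    fun _ ht => hμ.diag_eq_diagonal_add_triangle hsymm hzero hcont ht,
    hμ.eVariationOn_diag_le hsymm hzero⟩

theorem stmt_17 {Ω : Type*} [MeasureSpace Ω] [IsProbabilityMeasure (volume : Measure Ω)]
    (T : ℝ) (hT : 0 < T) (X : ℝ → Ω → ℝ)
    (hint : ∀ s t : ℝ, Integrable (fun ω => X s ω * X t ω))
    (hX0 : ∀ ω, X 0 ω = 0) (hmean : ∀ t : ℝ, ∫ ω, X t ω = 0)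
    (R : ℝ → ℝ → ℝ) (hR : ∀ s t : ℝ, R s t = ∫ ω, X s ω * X t ω)
    (hRcont : Continuous fun p : ℝ × ℝ => R p.1 p.2)
    (μ : SignedMeasure (ℝ × ℝ))
    (hμ : ∀ a₁ b₁ a₂ b₂ : ℝ, a₁ ≤ b₁ → a₂ ≤ b₂ →
      μ (Ioc a₁ b₁ ×ˢ Ioc a₂ b₂) = R b₁ b₂ + R a₁ a₂ - R a₁ b₂ - R b₁ a₂)
    (hatom : ∀ q : ℝ × ℝ, μ.totalVariation {q} = 0) :
    (∀ ψ : ℝ → ℝ, Continuous ψ → ∀ t ∈ Icc (0:ℝ) T,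
      Tendsto (fun ε : ℝ =>
          ∫ s in Ioc (0:ℝ) t, ψ s * (R (s + ε) (s + ε) - R s s) / ε)
        (𝓝[>] 0)
        (𝓝 (sintegral μ (fun q =>
            (if q.1 = q.2 ∧ 0 ≤ q.1 ∧ q.1 ≤ t then ψ q.2 else 0) +
            (if 0 ≤ q.1 ∧ q.1 < q.2 ∧ q.2 ≤ t then 2 * ψ q.2 else 0))))) ∧
    (∀ t ∈ Icc (0:ℝ) T,
      R t t = μ {q : ℝ × ℝ | q.1 = q.2 ∧ q.1 ∈ Icc 0 t}
        + 2 * μ {q : ℝ × ℝ | 0 ≤ q.1 ∧ q.1 < q.2 ∧ q.2 ≤ t}) ∧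
    eVariationOn (fun t => R t t) (Icc 0 T) ≤
      μ.totalVariation {q : ℝ × ℝ | q.1 = q.2 ∧ q.1 ∈ Icc 0 T}
        + 2 * μ.totalVariation (Icc 0 T ×ˢ Icc 0 T) := by
  have ⟨hlim, hdecomp, hvar⟩ := stmt_17_general hμ (fun s t => by simp only [hR, mul_comm])
    (fun t => by simp only [hR, hX0, zero_mul, integral_zero])
    fun s => (hRcont.comp (Continuous.prodMk_left s)).continuousWithinAt
  exact ⟨fun ψ hψ t _ => hlim t ψ hψ.continuousOn, fun t ht => hdecomp t ht.1,
    (hvar T).trans (le_add_left (le_mul_of_one_le_left' one_le_two))⟩
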